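/- For every ζ ∈ ℝ^d the identity 2 (a^eff ζ) · ζ = ∫₀¹ ∫_{𝕋^d} ∫_{ℝ^d} a(ξ−η) μ(ξ,η,s) ((η−ξ)·ζ − (χ_ζ(η,s) − χ_ζ(ξ,s)))² dη dξ ds holds, where χ_ζ(ξ,s) = Σ_j ζ_j χ_j(ξ,s). -/

import Mathlib

open MeasureTheory

noncomputable section

/-- The periodicity cell `[0,1)^d`, identified with the torus `𝕋^d`. -/
def cube (d : ℕ) : Set (Fin d → ℝ) := Set.univ.pi fun _ => Set.Ico (0 : ℝ) 1

/-- The operator `A(s)` applied pointwise. -/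
def Aop {d : ℕ} (a : (Fin d → ℝ) → ℝ) (μ : (Fin d → ℝ) → (Fin d → ℝ) → ℝ → ℝ)
    (s : ℝ) (v : (Fin d → ℝ) → ℝ) (ξ : Fin d → ℝ) : ℝ :=
  ∫ η, a (ξ - η) * μ ξ η s * (v η - v ξ)

/-- `β` is a time-periodic solution, in `L²(𝕋^{d+1}) ∩ H¹((0,1); L²(𝕋^d))`, of
`∂_s β - A(s)β = θ` (in the equivalent integrated-in-time formulation). -/
def IsCellSol {d : ℕ} (a : (Fin d → ℝ) → ℝ) (μ : (Fin d → ℝ) → (Fin d → ℝ) → ℝ → ℝ)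
    (θ : (Fin d → ℝ) → ℝ → ℝ) (β : (Fin d → ℝ) → ℝ → ℝ) : Prop :=
  Measurable (fun p : (Fin d → ℝ) × ℝ => β p.1 p.2) ∧
  (∀ ξ s, ∀ k : Fin d → ℤ, β (ξ + fun i => (k i : ℝ)) s = β ξ s) ∧
  (∀ ξ s, β ξ (s + 1) = β ξ s) ∧
  IntegrableOn (fun p : (Fin d → ℝ) × ℝ => (β p.1 p.2) ^ 2)
    (cube d ×ˢ Set.Ioo (0 : ℝ) 1) ∧
  (∀ᵐ ξ ∂(volume : Measure (Fin d → ℝ)), ∀ s ∈ Set.Icc (0 : ℝ) 1,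
    β ξ s = β ξ 0 + ∫ τ in (0 : ℝ)..s, (Aop a μ τ (fun η => β η τ) ξ + θ ξ τ))

/-- The right-hand side of the corrector equation:
`q_j(ξ,s) = -∫_{ℝ^d} a(ξ-η) μ(ξ,η,s)(η_j - ξ_j) dη`. -/
def qfun {d : ℕ} (a : (Fin d → ℝ) → ℝ) (μ : (Fin d → ℝ) → (Fin d → ℝ) → ℝ → ℝ)
    (j : Fin d) (ξ : Fin d → ℝ) (s : ℝ) : ℝ :=
  -∫ η, a (ξ - η) * μ ξ η s * (η j - ξ j)

/-- One-dimensional energy identity for periodic absolutely continuous functions. -/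
theorem oneD (v g : ℝ → ℝ) (hg : IntegrableOn g (Set.Ioo (0 : ℝ) 1))
    (hv : ∀ s ∈ Set.Icc (0 : ℝ) 1, v s = v 0 + ∫ τ in (0 : ℝ)..s, g τ) (hper : v 1 = v 0) :
    ∫ s in Set.Ioo (0 : ℝ) 1, v s * g s = 0 := by
  have hgi : IntervalIntegrable g volume 0 1 := by
    rw [intervalIntegrable_iff_integrableOn_Ioo_of_le zero_le_one]; exact hg
  set V : ℝ → ℝ := fun s => ∫ τ in (0 : ℝ)..s, g τ with hV
  have hac : AbsolutelyContinuousOnInterval V 0 1 :=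
    hgi.absolutelyContinuousOnInterval_intervalIntegral (by simp)
  have hV0 : V 0 = 0 := by simp [hV]
  have hV1 : V 1 = 0 := by
    have := hv 1 (by simp)
    simp only [hV]; linarith
  have hd : ∀ᵐ x, x ∈ Set.uIcc (0 : ℝ) 1 → deriv V x = g x := by
    filter_upwards [hgi.ae_hasDerivAt_integral] with x hx hx1
    exact (hx hx1 0 (by simp)).deriv
  have hd' : ∀ᵐ x ∂(volume.restrict (Set.Ioo (0 : ℝ) 1)), deriv V x = g x := by
    rw [ae_restrict_iff' measurableSet_Ioo]
    filter_upwards [hd] with x hx hx1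
    exact hx (by rw [Set.uIcc_of_le zero_le_one]; exact Set.Ioo_subset_Icc_self hx1)
  have h1 := hac.integral_mul_deriv_eq_deriv_mul hac
  have h2 : ∫ x in (0 : ℝ)..1, V x * deriv V x = 0 := by
    have h3 : ∫ x in (0 : ℝ)..1, deriv V x * V x = ∫ x in (0 : ℝ)..1, V x * deriv V x := by
      congr 1; ext x; ring
    rw [h3, hV0, hV1] at h1
    linarith
  have h4 : ∫ s in Set.Ioo (0 : ℝ) 1, g s = 0 := by
    have : V 1 = ∫ s in Set.Ioo (0 : ℝ) 1, g s := by
      simp only [hV]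
      rw [intervalIntegral.integral_of_le zero_le_one, integral_Ioc_eq_integral_Ioo]
    rw [← this, hV1]
  rw [intervalIntegral.integral_of_le zero_le_one, integral_Ioc_eq_integral_Ioo] at h2
  have hVc : ContinuousOn V (Set.Icc 0 1) := by
    have := hac.continuousOn
    rwa [Set.uIcc_of_le zero_le_one] at this
  have hVg : IntegrableOn (fun s => V s * g s) (Set.Ioo (0 : ℝ) 1) := by
    have h5 : IntegrableOn g (Set.Icc (0 : ℝ) 1) := by
      rw [integrableOn_Icc_iff_integrableOn_Ioo]; exact hg
    exact (h5.continuousOn_mul hVc isCompact_Icc).mono_set Set.Ioo_subset_Icc_self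
  have h6 : ∫ s in Set.Ioo (0 : ℝ) 1, V s * g s = 0 := by
    refine Eq.trans ?_ h2
    apply integral_congr_ae
    filter_upwards [hd'] with x hx
    rw [hx]
  calc ∫ s in Set.Ioo (0 : ℝ) 1, v s * g s
      = ∫ s in Set.Ioo (0 : ℝ) 1, (v 0 * g s + V s * g s) := by
        apply setIntegral_congr_fun measurableSet_Ioo
        intro s hs
        have := hv s (Set.Ioo_subset_Icc_self hs)
        simp only [hV]
        rw [this]; ring
    _ = 0 := by
        rw [integral_add (hg.const_mul _) hVg, integral_const_mul, h4, h6]; simp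

/-- The diagonal lattice in `ℝ^d × ℝ^d`. -/
def diagHom (d : ℕ) : (Fin d → ℤ) →+ (Fin d → ℝ) × (Fin d → ℝ) where
  toFun k := ((fun i => (k i : ℝ)), (fun i => (k i : ℝ)))
  map_zero' := by ext <;> simp
  map_add' x y := by ext <;> simp

theorem measurableSet_cube (d : ℕ) : MeasurableSet (cube d) :=
  MeasurableSet.univ_pi fun _ => measurableSet_Ico

theorem cube_existsUnique {d : ℕ} (x : Fin d → ℝ) :
    ∃! k : Fin d → ℤ, (fun i => (k i : ℝ)) + x ∈ cube d := by
  refine ⟨fun i => -⌊x i⌋, ?_, ?_⟩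
  · intro i _
    simp only [Pi.add_apply, Int.cast_neg, Set.mem_Ico]
    constructor
    · linarith [Int.floor_le (x i)]
    · linarith [Int.lt_floor_add_one (x i)]
  · intro k hk
    ext i
    have := hk i (Set.mem_univ i)
    simp only [Pi.add_apply, Set.mem_Ico] at this
    have h : ⌊x i⌋ = -k i := by
      rw [Int.floor_eq_iff]
      push_cast
      constructor <;> linarith
    omega

theorem lint_swap {d : ℕ} (f : (Fin d → ℝ) × (Fin d → ℝ) → ENNReal) (hf : Measurable f)
    (hper : ∀ ξ η, ∀ k : Fin d → ℤ,
      f (ξ + (fun i => (k i : ℝ)), η + (fun i => (k i : ℝ))) = f (ξ, η)) :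
    ∫⁻ ξ in cube d, ∫⁻ η, f (ξ, η) = ∫⁻ ξ in cube d, ∫⁻ η, f (η, ξ) := by
  let H := (diagHom d).range
  have hc : Countable H := by
    exact (Set.countable_range (diagHom d)).to_subtype
  have hinv : VAddInvariantMeasure H ((Fin d → ℝ) × (Fin d → ℝ)) volume := by
    refine ⟨fun c s _ => ?_⟩
    exact measure_preimage_add (volume.prod volume) (c : (Fin d → ℝ) × (Fin d → ℝ)) s
  have key : ∀ (p : (Fin d → ℝ) × (Fin d → ℝ) → (Fin d → ℝ)),
      (∀ k x, p (diagHom d k + x) = (fun i => (k i : ℝ)) + p x) → Measurable p →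
      IsAddFundamentalDomain H (p ⁻¹' cube d) volume := by
    intro p hp hpm
    refine IsAddFundamentalDomain.mk' (hpm (measurableSet_cube d)).nullMeasurableSet ?_
    intro x
    obtain ⟨k, hk, hu⟩ := cube_existsUnique (p x)
    refine ⟨⟨diagHom d k, k, rfl⟩, ?_, ?_⟩
    · change p (diagHom d k + x) ∈ cube d
      rw [hp]; exact hk
    · rintro ⟨_, l, rfl⟩ hl
      change p (diagHom d l + x) ∈ cube d at hl
      rw [hp] at hl
      have := hu l hl
      subst this; rfl
  have h1 := key Prod.fst (fun k x => rfl) measurable_fst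
  have h2 := key Prod.snd (fun k x => rfl) measurable_snd
  have h := h1.setLIntegral_eq h2 f (by
    rintro ⟨_, k, rfl⟩ ⟨ξ, η⟩
    rw [← hper ξ η k]
    change f ((fun i => (k i : ℝ)) + ξ, (fun i => (k i : ℝ)) + η) = _
    rw [add_comm ξ, add_comm η])
  have e1 : (Prod.fst ⁻¹' cube d : Set ((Fin d → ℝ) × (Fin d → ℝ))) = cube d ×ˢ Set.univ := by
    ext; simp
  have e2 : (Prod.snd ⁻¹' cube d : Set ((Fin d → ℝ) × (Fin d → ℝ))) = Set.univ ×ˢ cube d := by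
    ext; simp
  rw [e1, e2, Measure.volume_eq_prod, ← Measure.prod_restrict, ← Measure.prod_restrict,
    Measure.restrict_univ, lintegral_prod _ hf.aemeasurable,
    lintegral_prod_symm _ hf.aemeasurable] at h
  exact h

/-- Measure on (space, time) cell. -/
def NN (d : ℕ) : Measure ((Fin d → ℝ) × ℝ) :=
  (volume.restrict (cube d)).prod (volume.restrict (Set.Ioo (0 : ℝ) 1))

/-- Measure on (space, time) cell times the full space. -/
def MM (d : ℕ) : Measure (((Fin d → ℝ) × ℝ) × (Fin d → ℝ)) := (NN d).prod volume

instance (d : ℕ) : IsFiniteMeasure (volume.restrict (cube d)) := by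
  refine ⟨?_⟩
  rw [Measure.restrict_apply_univ]
  simp [cube, Real.volume_pi_Ico]

instance (d : ℕ) : IsFiniteMeasure (NN d) := by unfold NN; infer_instance

theorem lintM {d : ℕ} (f : ((Fin d → ℝ) × ℝ) × (Fin d → ℝ) → ENNReal) (hf : Measurable f) :
    ∫⁻ z, f z ∂(MM d) =
      ∫⁻ s in Set.Ioo (0 : ℝ) 1, ∫⁻ ξ in cube d, ∫⁻ η, f ((ξ, s), η) := by
  unfold MM
  rw [lintegral_prod _ hf.aemeasurable]
  unfold NN
  rw [lintegral_prod_symm _ hf.lintegral_prod_right'.aemeasurable]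

/-- Swap the two space variables. -/
def sw {d : ℕ} (z : ((Fin d → ℝ) × ℝ) × (Fin d → ℝ)) : ((Fin d → ℝ) × ℝ) × (Fin d → ℝ) :=
  ((z.2, z.1.2), z.1.1)

theorem sw_meas {d : ℕ} : Measurable (sw (d := d)) := by unfold sw; fun_prop

/-- Joint periodicity. -/
def JP {d : ℕ} {α : Type} (f : ((Fin d → ℝ) × ℝ) × (Fin d → ℝ) → α) : Prop :=
  ∀ ξ η s, ∀ k : Fin d → ℤ,
    f ((ξ + (fun i => (k i : ℝ)), s), η + (fun i => (k i : ℝ))) = f ((ξ, s), η)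

theorem lint_swapM {d : ℕ} (f : ((Fin d → ℝ) × ℝ) × (Fin d → ℝ) → ENNReal) (hf : Measurable f)
    (hp : JP f) : ∫⁻ z, f (sw z) ∂(MM d) = ∫⁻ z, f z ∂(MM d) := by
  rw [lintM (fun z => f (sw z)) (hf.comp sw_meas), lintM _ hf]
  apply lintegral_congr
  intro s
  exact (lint_swap (fun x => f ((x.1, s), x.2)) (by fun_prop) (fun ξ η k => hp ξ η s k)).symm

theorem integrable_swapM {d : ℕ} (f : ((Fin d → ℝ) × ℝ) × (Fin d → ℝ) → ℝ) (hf : Measurable f)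
    (hp : JP f) (hi : Integrable f (MM d)) : Integrable (fun z => f (sw z)) (MM d) := by
  refine ⟨(hf.comp sw_meas).aestronglyMeasurable, ?_⟩
  have := hi.2
  unfold HasFiniteIntegral at this ⊢
  rwa [lint_swapM (fun z => ‖f z‖ₑ) (by fun_prop) (fun ξ η s k => by simp only [hp ξ η s k])]

theorem int_swapM {d : ℕ} (f : ((Fin d → ℝ) × ℝ) × (Fin d → ℝ) → ℝ) (hf : Measurable f)
    (hp : JP f) (hi : Integrable f (MM d)) : ∫ z, f (sw z) ∂(MM d) = ∫ z, f z ∂(MM d) := by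
  rw [integral_eq_lintegral_pos_part_sub_lintegral_neg_part hi,
    integral_eq_lintegral_pos_part_sub_lintegral_neg_part (integrable_swapM f hf hp hi),
    lint_swapM (fun z => ENNReal.ofReal (f z)) (by fun_prop)
      (fun ξ η s k => by simp only [hp ξ η s k]),
    lint_swapM (fun z => ENNReal.ofReal (-f z)) (by fun_prop)
      (fun ξ η s k => by simp only [hp ξ η s k])]

theorem iter {d : ℕ} (f : ((Fin d → ℝ) × ℝ) × (Fin d → ℝ) → ℝ) (hi : Integrable f (MM d)) :
    ∫ s in Set.Ioo (0 : ℝ) 1, ∫ ξ in cube d, ∫ η, f ((ξ, s), η) = ∫ z, f z ∂(MM d) := by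
  unfold MM at *
  rw [integral_prod _ hi]
  have := hi.integral_prod_left
  unfold NN at *
  rw [integral_prod_symm _ this]

theorem base_int {d : ℕ} (b : (Fin d → ℝ) → ℝ) (hb : Integrable b) (hbm : Measurable b)
    (h : (Fin d → ℝ) × ℝ → ℝ) (hh : Integrable h (NN d)) (hhm : Measurable h) :
    Integrable (fun z : ((Fin d → ℝ) × ℝ) × (Fin d → ℝ) => b (z.1.1 - z.2) * h z.1) (MM d) := by
  unfold MM
  rw [integrable_prod_iff (by fun_prop)]
  constructor
  · exact Filter.Eventually.of_forall fun p => (hb.comp_sub_left p.1).mul_const (h p)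
  · have : ∀ p : (Fin d → ℝ) × ℝ, ∫ η, ‖b (p.1 - η) * h p‖ = (∫ z, ‖b z‖) * ‖h p‖ := by
      intro p
      simp_rw [norm_mul]
      rw [integral_mul_const]
      congr 1
      exact integral_sub_left_eq_self (fun z => ‖b z‖) volume p.1
    simp only [this]
    exact hh.norm.const_mul _

/-- Product of two functions in weighted `L²`. -/
theorem prod_int {α : Type} [MeasurableSpace α] {m : Measure α} (K f g : α → ℝ)
    (hK : Measurable K) (hf : Measurable f) (hg : Measurable g) (hK0 : ∀ x, 0 ≤ K x)
    (h1 : Integrable (fun x => K x * f x ^ 2) m) (h2 : Integrable (fun x => K x * g x ^ 2) m) :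
    Integrable (fun x => K x * (f x * g x)) m := by
  refine (h1.add h2).mono' (by fun_prop) (Filter.Eventually.of_forall fun x => ?_)
  simp only [Pi.add_apply, norm_mul, Real.norm_eq_abs, abs_of_nonneg (hK0 x)]
  rw [← mul_add]
  apply mul_le_mul_of_nonneg_left _ (hK0 x)
  rw [← abs_mul, abs_le]
  constructor <;> nlinarith [sq_nonneg (f x + g x), sq_nonneg (f x - g x), sq_nonneg (f x), sq_nonneg (g x)]

/-- Measurable and in weighted `L²`. -/
def Good {α : Type} [MeasurableSpace α] (m : Measure α) (K f : α → ℝ) : Prop :=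
  Measurable f ∧ Integrable (fun x => K x * f x ^ 2) m

section good
variable {α : Type} [MeasurableSpace α] {m : Measure α} {K f g : α → ℝ}

theorem Good.mul_int (hf : Good m K f) (hg : Good m K g) (hK : Measurable K)
    (hK0 : ∀ x, 0 ≤ K x) : Integrable (fun x => K x * (f x * g x)) m :=
  prod_int K f g hK hf.1 hg.1 hK0 hf.2 hg.2

theorem Good.add (hf : Good m K f) (hg : Good m K g) (hK : Measurable K)
    (hK0 : ∀ x, 0 ≤ K x) : Good m K (fun x => f x + g x) := by
  refine ⟨hf.1.add hg.1, ?_⟩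
  refine ((hf.2.add hg.2).add ((hf.mul_int hg hK hK0).const_mul 2)).congr ?_
  refine Filter.Eventually.of_forall fun x => ?_
  simp only [Pi.add_apply]
  ring

theorem Good.smul (hf : Good m K f) (c : ℝ) : Good m K (fun x => c * f x) := by
  refine ⟨hf.1.const_mul c, ?_⟩
  refine (hf.2.const_mul (c ^ 2)).congr ?_
  refine Filter.Eventually.of_forall fun x => ?_
  simp only
  ring

theorem Good.sub (hf : Good m K f) (hg : Good m K g) (hK : Measurable K)
    (hK0 : ∀ x, 0 ≤ K x) : Good m K (fun x => f x - g x) := by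
  have := hf.add (hg.smul (-1)) hK hK0
  refine ⟨hf.1.sub hg.1, this.2.congr ?_⟩
  refine Filter.Eventually.of_forall fun x => ?_
  simp only
  ring

theorem Good.sum {ι : Type} (t : Finset ι) (F : ι → α → ℝ) (hF : ∀ i, Good m K (F i))
    (hK : Measurable K) (hK0 : ∀ x, 0 ≤ K x) : Good m K (fun x => ∑ i ∈ t, F i x) := by
  classical
  induction t using Finset.induction_on with
  | empty => exact ⟨by simp, by simp⟩
  | insert i t hi ih =>
    simp only [Finset.sum_insert hi]
    exact (hF i).add ih hK hK0

end good

theorem MeasureTheory.Integrable.fun_sub {α : Type} [MeasurableSpace α] {m : Measure α}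
    {f g : α → ℝ} (hf : Integrable f m) (hg : Integrable g m) :
    Integrable (fun x => f x - g x) m := hf.sub hg

/-- For every `ζ ∈ ℝ^d`,
`2 (a^eff ζ)·ζ = ∫₀¹∫_{𝕋^d}∫_{ℝ^d} a(ξ-η) μ(ξ,η,s) ((η-ξ)·ζ - (χ_ζ(η,s)-χ_ζ(ξ,s)))² dη dξ ds`,
where `χ_ζ = Σ_j ζ_j χ_j`. -/
theorem stmt14 {d : ℕ} (hd : 1 ≤ d)
    (a : (Fin d → ℝ) → ℝ) (μ : (Fin d → ℝ) → (Fin d → ℝ) → ℝ → ℝ) (μm μp : ℝ)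
    (hameas : Measurable a) (hanonneg : ∀ z, 0 ≤ a z)
    (haint : Integrable a) (hamass : ∫ z, a z = 1)
    (hamom : Integrable (fun z => ‖z‖ ^ 2 * a z))
    (hasymm : ∀ z, a (-z) = a z)
    (hμmeas : Measurable fun p : (Fin d → ℝ) × (Fin d → ℝ) × ℝ => μ p.1 p.2.1 p.2.2)
    (hμper₁ : ∀ ξ η s, ∀ k : Fin d → ℤ, μ (ξ + fun i => (k i : ℝ)) η s = μ ξ η s)
    (hμper₂ : ∀ ξ η s, ∀ k : Fin d → ℤ, μ ξ (η + fun i => (k i : ℝ)) s = μ ξ η s)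
    (hμper₃ : ∀ ξ η s, μ ξ η (s + 1) = μ ξ η s)
    (hμsymm : ∀ ξ η s, μ ξ η s = μ η ξ s)
    (hμm : 0 < μm) (hμlb : ∀ ξ η s, μm ≤ μ ξ η s) (hμub : ∀ ξ η s, μ ξ η s ≤ μp)
    (χ : Fin d → (Fin d → ℝ) → ℝ → ℝ)
    (hχ : ∀ j : Fin d, IsCellSol a μ (qfun a μ j) (χ j))
    (hχ0 : ∀ j : Fin d,
      (∫ p in cube d ×ˢ Set.Ioo (0 : ℝ) 1, χ j (Prod.fst p) (Prod.snd p)) = 0)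
    (ahat : Fin d → Fin d → ℝ)
    (hahat : ∀ i j, ahat i j =
      ∫ s in Set.Ioo (0 : ℝ) 1, ∫ ξ in cube d, ∫ η,
        a (ξ - η) * μ ξ η s *
          ((1 / 2) * (η i - ξ i) * (η j - ξ j) - (η i - ξ i) * χ j η s))
    (aeff : Fin d → Fin d → ℝ)
    (haeff : ∀ i j, aeff i j = (1 / 2) * (ahat i j + ahat j i)) :
    ∀ ζ : Fin d → ℝ,
      2 * (∑ i, (∑ j, aeff i j * ζ j) * ζ i) =
        ∫ s in Set.Ioo (0 : ℝ) 1, ∫ ξ in cube d, ∫ η,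
          a (ξ - η) * μ ξ η s *
            ((∑ j, (η j - ξ j) * ζ j) -
              ((∑ j, ζ j * χ j η s) - (∑ j, ζ j * χ j ξ s))) ^ 2 := by
  intro ζ
  -- abbreviations
  set K : ((Fin d → ℝ) × ℝ) × (Fin d → ℝ) → ℝ :=
    fun z => a (z.1.1 - z.2) * μ z.1.1 z.2 z.1.2 with hKdef
  set C : Fin d → ((Fin d → ℝ) × ℝ) × (Fin d → ℝ) → ℝ := fun j z => χ j z.2 z.1.2 with hCdef
  set E : Fin d → ((Fin d → ℝ) × ℝ) × (Fin d → ℝ) → ℝ := fun j z => χ j z.1.1 z.1.2 with hEdef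
  set D : Fin d → ((Fin d → ℝ) × ℝ) × (Fin d → ℝ) → ℝ := fun j z => z.2 j - z.1.1 j with hDdef
  have hμp0 : 0 ≤ μp := le_trans hμm.le ((hμlb 0 0 0).trans (hμub 0 0 0))
  have hμ0 : ∀ ξ η s, 0 ≤ μ ξ η s := fun ξ η s => hμm.le.trans (hμlb ξ η s)
  have hKm : Measurable K := by
    have h1 : Measurable fun z : ((Fin d → ℝ) × ℝ) × (Fin d → ℝ) => a (z.1.1 - z.2) := by fun_prop
    have h2 : Measurable fun z : ((Fin d → ℝ) × ℝ) × (Fin d → ℝ) => μ z.1.1 z.2 z.1.2 :=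
      hμmeas.comp (g := fun p : (Fin d → ℝ) × (Fin d → ℝ) × ℝ => μ p.1 p.2.1 p.2.2)
        (f := fun z : ((Fin d → ℝ) × ℝ) × (Fin d → ℝ) => (z.1.1, z.2, z.1.2)) (by fun_prop)
    exact h1.mul h2
  have hK0 : ∀ z, 0 ≤ K z := fun z => mul_nonneg (hanonneg _) (hμ0 _ _ _)
  have hKle : ∀ z, K z ≤ μp * a (z.1.1 - z.2) := fun z => by
    simp only [hKdef]
    rw [mul_comm]
    exact mul_le_mul_of_nonneg_right (hμub _ _ _) (hanonneg _)
  have hKsw : ∀ z, K (sw z) = K z := fun z => by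
    simp only [hKdef, sw]
    rw [hμsymm, ← hasymm, neg_sub]
  have hKJP : JP K := fun ξ η s k => by
    simp only [hKdef]
    rw [hμper₁, hμper₂, add_sub_add_right_eq_sub]
  have good_of : ∀ f : ((Fin d → ℝ) × ℝ) × (Fin d → ℝ) → ℝ, Measurable f →
      Integrable (fun z => a (z.1.1 - z.2) * f z ^ 2) (MM d) → Good (MM d) K f := by
    intro f hf hi
    refine ⟨hf, (hi.const_mul μp).mono' (by fun_prop) (Filter.Eventually.of_forall fun z => ?_)⟩
    rw [Real.norm_eq_abs, abs_of_nonneg (mul_nonneg (hK0 z) (sq_nonneg _)), ← mul_assoc]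
    exact mul_le_mul_of_nonneg_right (hKle z) (sq_nonneg _)
  have gE : ∀ j, Good (MM d) K (E j) := by
    intro j
    obtain ⟨hm, -, -, hi, -⟩ := hχ j
    refine good_of _ (hm.comp (f := fun z : ((Fin d → ℝ) × ℝ) × (Fin d → ℝ) => z.1)
      measurable_fst) ?_
    refine base_int a haint hameas (fun p => χ j p.1 p.2 ^ 2) ?_ (hm.pow_const 2)
    unfold NN
    rw [Measure.prod_restrict]
    exact hi
  have EJP : ∀ j, JP (E j) := fun j ξ η s k => (hχ j).2.1 ξ s k
  have gC : ∀ j, Good (MM d) K (C j) := by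
    intro j
    refine ⟨(gE j).1.comp sw_meas, ?_⟩
    have := integrable_swapM (fun z => K z * E j z ^ 2) (hKm.mul ((gE j).1.pow_const 2))
      (fun ξ η s k => by simp only [hKJP ξ η s k, EJP j ξ η s k]) (gE j).2
    simp only [hKsw] at this
    exact this
  have g1 : Good (MM d) K (fun _ => 1) := by
    refine good_of _ measurable_const ?_
    simpa using base_int a haint hameas (fun _ => 1) (integrable_const _) measurable_const
  have gD : ∀ j, Good (MM d) K (D j) := by
    intro j
    have hDm : Measurable (D j) := by simp only [hDdef]; fun_prop
    refine good_of _ hDm ?_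
    have hb : Integrable (fun z : Fin d → ℝ => a z * z j ^ 2) := by
      refine hamom.mono' (by fun_prop) (Filter.Eventually.of_forall fun z => ?_)
      rw [Real.norm_eq_abs, abs_of_nonneg (mul_nonneg (hanonneg z) (sq_nonneg _)), mul_comm]
      refine mul_le_mul_of_nonneg_right ?_ (hanonneg z)
      rw [← sq_abs (z j)]
      exact pow_le_pow_left₀ (abs_nonneg _) (norm_le_pi_norm z j) 2
    have := base_int _ hb (by fun_prop) (fun _ => 1) (integrable_const _) measurable_const
    refine this.congr (Filter.Eventually.of_forall fun z => ?_)
    simp only [hDdef, Pi.sub_apply]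
    ring
  set U : ((Fin d → ℝ) × ℝ) × (Fin d → ℝ) → ℝ := fun z => ∑ j, ζ j * C j z with hU
  set V : ((Fin d → ℝ) × ℝ) × (Fin d → ℝ) → ℝ := fun z => ∑ j, ζ j * E j z with hV
  set W : ((Fin d → ℝ) × ℝ) × (Fin d → ℝ) → ℝ := fun z => ∑ j, ζ j * D j z with hW
  have gU : Good (MM d) K U := Good.sum _ _ (fun j => (gC j).smul (ζ j)) hKm hK0
  have gV : Good (MM d) K V := Good.sum _ _ (fun j => (gE j).smul (ζ j)) hKm hK0
  have gW : Good (MM d) K W := Good.sum _ _ (fun j => (gD j).smul (ζ j)) hKm hK0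
  have VJP : JP V := fun ξ η s k => by simp only [hV, EJP _ ξ η s k]
  have WJP : JP W := fun ξ η s k => by simp only [hW, hDdef, Pi.add_apply, add_sub_add_right_eq_sub]
  have Vsw : ∀ z, V (sw z) = U z := fun z => rfl
  have Wsw : ∀ z, W (sw z) = -W z := fun z => by
    simp only [hW, hDdef, sw]
    rw [← Finset.sum_neg_distrib]
    exact Finset.sum_congr rfl fun j _ => by ring
  have iWW := gW.mul_int gW hKm hK0
  have iWU := gW.mul_int gU hKm hK0
  have iWV := gW.mul_int gV hKm hK0
  have iUU := gU.mul_int gU hKm hK0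
  have iUV := gU.mul_int gV hKm hK0
  have iVV := gV.mul_int gV hKm hK0
  -- symmetry consequences
  have eVV : ∫ z, K z * (U z * U z) ∂(MM d) = ∫ z, K z * (V z * V z) ∂(MM d) := by
    have := int_swapM (fun z => K z * (V z * V z)) (hKm.mul (gV.1.mul gV.1))
      (fun ξ η s k => by simp only [hKJP ξ η s k, VJP ξ η s k]) iVV
    simp only [hKsw, Vsw] at this
    exact this
  have eWV : ∫ z, K z * (W z * U z) ∂(MM d) = -∫ z, K z * (W z * V z) ∂(MM d) := by
    have := int_swapM (fun z => K z * (W z * V z)) (hKm.mul (gW.1.mul gV.1))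
      (fun ξ η s k => by simp only [hKJP ξ η s k, VJP ξ η s k, WJP ξ η s k]) iWV
    simp only [hKsw, Vsw, Wsw] at this
    rw [← this, ← integral_neg]
    congr 1; ext z; ring
  -- energy identity
  have energy : ∫ z, K z * (V z * (U z - V z - W z)) ∂(MM d) = 0 := by
    have hi : Integrable (fun z => K z * (V z * (U z - V z - W z))) (MM d) :=
      gV.mul_int ((gU.sub gV hKm hK0).sub gW hKm hK0) hKm hK0
    have iA : ∀ j, Integrable (fun z => K z * (C j z - E j z)) (MM d) := fun j => by
      simpa using ((gC j).sub (gE j) hKm hK0).mul_int g1 hKm hK0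
    have iD : ∀ j, Integrable (fun z => K z * D j z) (MM d) := fun j => by
      simpa using (gD j).mul_int g1 hKm hK0
    let g : Fin d → (Fin d → ℝ) → ℝ → ℝ :=
      fun j ξ s => Aop a μ s (fun η => χ j η s) ξ + qfun a μ j ξ s
    have ig : ∀ j, Integrable (fun p : (Fin d → ℝ) × ℝ => g j p.1 p.2) (NN d) := by
      intro j
      exact (Integrable.integral_prod_left (iA j)).add (Integrable.integral_prod_left (iD j)).neg
    have eB : ∀ᵐ p ∂(NN d), ∫ η, K (p, η) * (V (p, η) * (U (p, η) - V (p, η) - W (p, η))) =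
        (∑ j, ζ j * χ j p.1 p.2) * ∑ j, ζ j * g j p.1 p.2 := by
      have h1 : ∀ᵐ p ∂(NN d), ∀ j, Integrable (fun η => K (p, η) * (C j (p, η) - E j (p, η))) :=
        ae_all_iff.2 fun j => Integrable.prod_right_ae (iA j)
      have h2 : ∀ᵐ p ∂(NN d), ∀ j, Integrable (fun η => K (p, η) * D j (p, η)) :=
        ae_all_iff.2 fun j => Integrable.prod_right_ae (iD j)
      filter_upwards [h1, h2] with p h1 h2
      have h3 : ∀ j, g j p.1 p.2 =
          ∫ η, (K (p, η) * (C j (p, η) - E j (p, η)) - K (p, η) * D j (p, η)) := by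
        intro j
        rw [integral_sub (h1 j) (h2 j), sub_eq_add_neg]
        rfl
      simp only [h3]
      simp only [← integral_const_mul]
      rw [← integral_finsetSum _ fun j _ => ((h1 j).fun_sub (h2 j)).const_mul (ζ j),
        ← integral_const_mul]
      congr 1
      ext η
      simp only [hU, hV, hW]
      rw [← Finset.sum_sub_distrib, ← Finset.sum_sub_distrib, mul_left_comm, Finset.mul_sum]
      congr 1
      exact Finset.sum_congr rfl fun j _ => by ring
    unfold MM at hi ⊢
    rw [integral_prod _ hi, integral_congr_ae eB]
    have hi2 := (integrable_congr eB).1 hi.integral_prod_left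
    unfold NN at hi2 ig ⊢
    rw [integral_prod _ hi2]
    have c1 : ∀ᵐ ξ ∂(volume.restrict (cube d)), ∀ j,
        Integrable (fun s => g j ξ s) (volume.restrict (Set.Ioo (0 : ℝ) 1)) :=
      ae_all_iff.2 fun j => Integrable.prod_right_ae (ig j)
    have c2 : ∀ᵐ ξ ∂(volume.restrict (cube d)), ∀ j, ∀ s ∈ Set.Icc (0 : ℝ) 1,
        χ j ξ s = χ j ξ 0 + ∫ τ in (0 : ℝ)..s, g j ξ τ :=
      ae_all_iff.2 fun j => ae_restrict_of_ae (hχ j).2.2.2.2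
    apply integral_eq_zero_of_ae
    filter_upwards [c1, c2] with ξ c1 c2
    refine oneD (fun s => ∑ j, ζ j * χ j ξ s) (fun s => ∑ j, ζ j * g j ξ s) ?_ ?_ ?_
    · exact integrable_finsetSum _ fun j _ => (c1 j).const_mul _
    · intro s hs
      have hii : ∀ j, IntervalIntegrable (g j ξ) volume 0 s := by
        intro j
        rw [intervalIntegrable_iff_integrableOn_Ioo_of_le hs.1]
        exact IntegrableOn.mono_set (c1 j) (Set.Ioo_subset_Ioo_right hs.2)
      rw [intervalIntegral.integral_finsetSum fun j _ => (hii j).const_mul _,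
        ← Finset.sum_add_distrib]
      refine Finset.sum_congr rfl fun j _ => ?_
      rw [intervalIntegral.integral_const_mul, ← mul_add, ← c2 j s hs]
    · refine Finset.sum_congr rfl fun j _ => ?_
      have := (hχ j).2.2.1 ξ 0
      rw [zero_add] at this
      rw [this]
  have energy' : ∫ z, K z * (U z * V z) ∂(MM d) - ∫ z, K z * (V z * V z) ∂(MM d)
      - ∫ z, K z * (W z * V z) ∂(MM d) = 0 := by
    rw [← energy, ← integral_sub iUV iVV, ← integral_sub (iUV.fun_sub iVV) iWV]
    congr 1; ext z; ring
  -- right-hand side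
  have hR : ∫ s in Set.Ioo (0 : ℝ) 1, ∫ ξ in cube d, ∫ η,
          a (ξ - η) * μ ξ η s *
            ((∑ j, (η j - ξ j) * ζ j) -
              ((∑ j, ζ j * χ j η s) - (∑ j, ζ j * χ j ξ s))) ^ 2 =
      ∫ z, K z * (W z * W z) ∂(MM d) - 2 * ∫ z, K z * (W z * U z) ∂(MM d) := by
    have gS := gW.sub (gU.sub gV hKm hK0) hKm hK0
    have h1 := iter _ gS.2
    have h2 : ∫ z, K z * (W z - (U z - V z)) ^ 2 ∂(MM d) =
        ∫ z, K z * (W z * W z) ∂(MM d) - 2 * ∫ z, K z * (W z * U z) ∂(MM d)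
        + 2 * ∫ z, K z * (W z * V z) ∂(MM d) + ∫ z, K z * (U z * U z) ∂(MM d)
        - 2 * ∫ z, K z * (U z * V z) ∂(MM d) + ∫ z, K z * (V z * V z) ∂(MM d) := by
      simp only [← integral_const_mul]
      rw [← integral_sub iWW (iWU.const_mul 2),
        ← integral_add (iWW.fun_sub (iWU.const_mul 2)) (iWV.const_mul 2),
        ← integral_add ((iWW.fun_sub (iWU.const_mul 2)).fun_add (iWV.const_mul 2)) iUU,
        ← integral_sub (((iWW.fun_sub (iWU.const_mul 2)).fun_add (iWV.const_mul 2)).fun_add iUU)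
          (iUV.const_mul 2),
        ← integral_add ((((iWW.fun_sub (iWU.const_mul 2)).fun_add (iWV.const_mul 2)).fun_add iUU).fun_sub
          (iUV.const_mul 2)) iVV]
      congr 1; ext z; ring
    have h3 : ∫ z, K z * (W z - (U z - V z)) ^ 2 ∂(MM d) =
        ∫ z, K z * (W z * W z) ∂(MM d) - 2 * ∫ z, K z * (W z * U z) ∂(MM d) := by
      linarith
    rw [← h3, ← h1]
    simp only [hU, hV, hW, hKdef, hCdef, hEdef, hDdef, mul_comm (ζ _) (_ - _)]
  -- left-hand side
  have hah : ∀ i j, ahat i j = ∫ z, K z * ((1 / 2) * (D i z * D j z) - D i z * C j z) ∂(MM d) ∧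
      Integrable (fun z => K z * ((1 / 2) * (D i z * D j z) - D i z * C j z)) (MM d) := by
    intro i j
    have h1 : Integrable (fun z => K z * ((1 / 2) * (D i z * D j z) - D i z * C j z)) (MM d) := by
      refine ((((gD i).mul_int (gD j) hKm hK0).const_mul (1 / 2)).sub
        ((gD i).mul_int (gC j) hKm hK0)).congr (Filter.Eventually.of_forall fun z => ?_)
      simp only [Pi.sub_apply]
      ring
    refine ⟨?_, h1⟩
    rw [hahat, ← iter _ h1]
    simp only [hKdef, hCdef, hDdef, mul_assoc]
  have hsum : ∑ i, ∑ j, ζ i * ζ j * ahat i j =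
      (1 / 2) * ∫ z, K z * (W z * W z) ∂(MM d) - ∫ z, K z * (W z * U z) ∂(MM d) := by
    simp only [(hah _ _).1, ← integral_const_mul]
    have h1 : ∀ i, ∑ j, ∫ z, ζ i * ζ j * (K z * ((1 / 2) * (D i z * D j z) - D i z * C j z)) ∂(MM d)
        = ∫ z, ∑ j, ζ i * ζ j * (K z * ((1 / 2) * (D i z * D j z) - D i z * C j z)) ∂(MM d) :=
      fun i => (integral_finsetSum _ fun j _ => ((hah i j).2.const_mul _)).symm
    simp only [h1]
    rw [← integral_finsetSum _ fun i _ => integrable_finsetSum _ fun j _ =>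
      ((hah i j).2.const_mul _), ← integral_sub (iWW.const_mul _) iWU]
    congr 1; ext z
    have e1 : W z * W z = ∑ i, ∑ j, (ζ i * D i z) * (ζ j * D j z) := by
      simp only [hW, Finset.sum_mul_sum]
    have e2 : W z * U z = ∑ i, ∑ j, (ζ i * D i z) * (ζ j * C j z) := by
      simp only [hW, hU, Finset.sum_mul_sum]
    rw [e1, e2]
    simp only [Finset.mul_sum, ← Finset.sum_sub_distrib]
    exact Finset.sum_congr rfl fun i _ => Finset.sum_congr rfl fun j _ => by ring
  have hL : ∑ i, (∑ j, aeff i j * ζ j) * ζ i = ∑ i, ∑ j, ζ i * ζ j * ahat i j := by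
    have e1 : ∑ i, (∑ j, aeff i j * ζ j) * ζ i =
        (1 / 2) * ∑ i, ∑ j, ζ i * ζ j * ahat i j + (1 / 2) * ∑ i, ∑ j, ζ i * ζ j * ahat j i := by
      simp only [haeff, Finset.mul_sum, Finset.sum_mul, ← Finset.sum_add_distrib]
      exact Finset.sum_congr rfl fun i _ => Finset.sum_congr rfl fun j _ => by ring
    have e2 : ∑ i, ∑ j, ζ i * ζ j * ahat j i = ∑ i, ∑ j, ζ i * ζ j * ahat i j := by
      rw [Finset.sum_comm]
      exact Finset.sum_congr rfl fun i _ => Finset.sum_congr rfl fun j _ => by ring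
    rw [e1, e2]; ring
  rw [hR, hL, hsum]
  ring
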